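/- arXiv:1807.03536 — 2 statements merged into one kernel-verified Lean document; each statement's English description precedes it below -/
import Mathlib

section
/- Let Φ̊ ⊂ ℝⁿ be the root system of type BC_n with n ≥ 2. A subset Φ̊' ⊆ Φ̊ is a maximal closed subroot system of Φ̊ if and only if Φ̊_d ⊆ Φ̊' and Φ̊' ∩ (Φ̊_s ∪ Φ̊_ℓ) is a maximal closed subroot system of the reduced root system Φ̊_s ∪ Φ̊_ℓ (which is of type B_n). Equivalently, the maximal closed subroot systems of Φ̊ are exactly the sets Φ̊_d ∪ Φ̊'' where Φ̊'' is a maximal closed subroot system of Φ̊_s ∪ Φ̊_ℓ. -/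
/-!
Write `S = {±εᵢ}`; every root of `BC_n` lies in `S` or is a sum of two elements of `S`. Let `R` be
`B_n` or `BC_n`. For a proper closed subroot system `Δ` of `R`, the set `T` of all `i` with `εᵢ ∉ Δ`
is nonempty. If `x, y ∈ S` and `x + y ∈ Δ`, then `x ∈ Δ ↔ y ∈ Δ`, because `y = -x + (x + y)`; so the
coordinates indexed by `T` of any root in `Δ` have even sum. Conversely, the roots with even `T`-sum
form a closed subroot system because the pairings are integral, and distinct nonempty `T` give
incomparable ones. Hence the maximal closed subroot systems of both `B_n` and `BC_n` are
parametrized by the nonempty `T`, and since the roots `±2εᵢ` satisfy every parity condition, the two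
parametrizations differ exactly by `Φ̊_d`.
-/

open scoped RealInnerProductSpace Pointwise

noncomputable section

namespace BdS

variable {V Y : Type*} [NormedAddCommGroup V] [InnerProductSpace ℝ V]
variable [AddCommGroup Y] [Module ℝ Y]

/-- `pairing β α = (β, α∨) = 2(β,α)/(α,α)`. -/
def pairing (β α : V) : ℝ := 2 * ⟪β, α⟫ / ⟪α, α⟫

/-- `reflRoot α v = s_α(v) = v − (v, α∨)α`. -/
def reflRoot (α v : V) : V := v - pairing v α • α

/-- A (finite) root system in `V`. -/
def IsRootSystem (Φ : Set V) : Prop :=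
  Φ.Finite ∧ (0 : V) ∉ Φ ∧ Submodule.span ℝ Φ = ⊤ ∧
    (∀ α ∈ Φ, ∀ β ∈ Φ, reflRoot α β ∈ Φ) ∧
    ∀ α ∈ Φ, ∀ β ∈ Φ, ∃ m : ℤ, pairing β α = (m : ℝ)

def IsReduced (Φ : Set V) : Prop :=
  ∀ α ∈ Φ, ∀ c : ℝ, c • α ∈ Φ → c • α = α ∨ c • α = -α

def IsIrreducible (Φ : Set V) : Prop :=
  ∀ Φ₁ Φ₂ : Set V, Φ = Φ₁ ∪ Φ₂ → (∀ x ∈ Φ₁, ∀ y ∈ Φ₂, ⟪x, y⟫ = 0) →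
    Φ₁ = ∅ ∨ Φ₂ = ∅

/-- divisible roots -/
def divSet (Φ : Set V) : Set V := {α ∈ Φ | (2:ℝ)⁻¹ • α ∈ Φ}
/-- non-divisible roots -/
def ndSet (Φ : Set V) : Set V := Φ \ divSet Φ
/-- short roots: non-divisible roots of non-maximal squared length -/
def shortSet (Φ : Set V) : Set V := {α ∈ ndSet Φ | ∃ β ∈ ndSet Φ, ⟪α, α⟫ < ⟪β, β⟫}
/-- long roots -/
def longSet (Φ : Set V) : Set V := ndSet Φ \ shortSet Φ

/-- An extension datum of type `(Φ, Y)`. -/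
def IsExtensionDatum (Φ : Set V) (Λ : V → Set Y) : Prop :=
  (∀ α ∈ Φ, ∀ β ∈ Φ, ∀ z ∈ Λ α, ∀ y ∈ Λ β, y - pairing β α • z ∈ Λ (reflRoot α β)) ∧
  (0 : Y) ∈ Λ 0 ∧
  (∀ α ∈ ndSet Φ, (0 : Y) ∈ Λ α) ∧
  (∀ α ∈ divSet Φ, (Λ α).Nonempty) ∧
  Submodule.span ℝ (⋃ α ∈ insert (0 : V) Φ, Λ α) = ⊤

/-- subroot system of a finite root system -/
def IsSubRS (Φ Δ : Set V) : Prop :=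
  Δ.Nonempty ∧ Δ ⊆ Φ ∧ ∀ α ∈ Δ, ∀ β ∈ Δ, reflRoot α β ∈ Δ

def IsClosedSubRS (Φ Δ : Set V) : Prop :=
  IsSubRS Φ Δ ∧ ∀ α ∈ Δ, ∀ β ∈ Δ, α + β ∈ Φ → α + β ∈ Δ

def IsMaxClosedSubRS (Φ Δ : Set V) : Prop :=
  IsClosedSubRS Φ Δ ∧ Δ ≠ Φ ∧
    ∀ Δ' : Set V, IsClosedSubRS Φ Δ' → Δ' ≠ Φ → Δ ⊆ Δ' → Δ' = Δ

/-- semi-closed subroot system, relative to given short/long/divisible parts -/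
def IsSemiClosedSubRS (Φ Φs Φl Φd Δ : Set V) : Prop :=
  IsSubRS Φ Δ ∧ ¬ (∀ α ∈ Δ, ∀ β ∈ Δ, α + β ∈ Φ → α + β ∈ Δ) ∧
    ∀ α ∈ Δ, ∀ β ∈ Δ, α + β ∈ Φ → α + β ∉ Δ →
      (α ∈ Φs ∧ β ∈ Φs ∧ α + β ∈ Φl ∪ Φd) ∨ (α ∈ Φl ∧ β ∈ Φl ∧ α + β ∈ Φd)

def IsMaxSemiClosedSubRS (Φ Φs Φl Φd Δ : Set V) : Prop :=
  IsSemiClosedSubRS Φ Φs Φl Φd Δ ∧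
    ∀ Δ' : Set V, IsClosedSubRS Φ Δ' → Δ' ≠ Φ → ¬ Δ ⊂ Δ'

/-- the set of real roots attached to an extension datum -/
def PhiRe (Φ : Set V) (Λ : V → Set Y) : Set (V × Y) := {x | x.1 ∈ Φ ∧ x.2 ∈ Λ x.1}

/-- affine reflection `s_{α ⊕ y}(β ⊕ z) = s_α(β) ⊕ (z − (β,α∨)y)` -/
def reflAff (a x : V × Y) : V × Y := (reflRoot a.1 x.1, x.2 - pairing x.1 a.1 • a.2)

/-- subroot system of a set of real roots `R` -/
def IsSubSys (R Ψ : Set (V × Y)) : Prop :=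
  Ψ.Nonempty ∧ Ψ ⊆ R ∧ Ψ ≠ R ∧ ∀ a ∈ Ψ, ∀ x ∈ Ψ, reflAff a x ∈ Ψ

def IsClosedSubSys (R Ψ : Set (V × Y)) : Prop :=
  IsSubSys R Ψ ∧ ∀ x ∈ Ψ, ∀ y ∈ Ψ, x + y ∈ R → x + y ∈ Ψ

def IsMaxClosedSubSys (R Ψ : Set (V × Y)) : Prop :=
  IsClosedSubSys R Ψ ∧ ∀ Ψ' : Set (V × Y), IsClosedSubSys R Ψ' → Ψ ⊆ Ψ' → Ψ' = Ψ

/-- gradient of a subroot system -/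
def Gr (Ψ : Set (V × Y)) : Set V := {α | ∃ y : Y, (α, y) ∈ Ψ}

def Zset (Ψ : Set (V × Y)) (α : V) : Set Y := {y | (α, y) ∈ Ψ}

abbrev E (n : ℕ) := EuclideanSpace ℝ (Fin n)

def eps {n : ℕ} (i : Fin n) : E n := EuclideanSpace.single i 1

def shortBC (n : ℕ) : Set (E n) := {v | ∃ i : Fin n, v = eps i ∨ v = -eps i}

def longBC (n : ℕ) : Set (E n) :=
  {v | ∃ i j : Fin n, i ≠ j ∧ ∃ c d : ℝ, (c = 1 ∨ c = -1) ∧ (d = 1 ∨ d = -1) ∧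
    v = c • eps i + d • eps j}

def divBC (n : ℕ) : Set (E n) :=
  {v | ∃ i : Fin n, v = (2:ℝ) • eps i ∨ v = -((2:ℝ) • eps i)}

def BCn (n : ℕ) : Set (E n) := shortBC n ∪ longBC n ∪ divBC n
def Bn (n : ℕ) : Set (E n) := shortBC n ∪ longBC n
def Cn (n : ℕ) : Set (E n) := longBC n ∪ divBC n

lemma reflRoot_eq_reflection (α v : V) : reflRoot α v = (ℝ ∙ α)ᗮ.reflection v := by
  rw [Submodule.reflection_orthogonal_apply, Submodule.reflection_singleton_apply, reflRoot,
    pairing, real_inner_comm, real_inner_self_eq_norm_sq, two_smul, ← add_smul, mul_div_assoc,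
    two_mul]
  simp

lemma reflRoot_neg_right (α v : V) : reflRoot α (-v) = -reflRoot α v := by
  simp only [reflRoot_eq_reflection, map_neg]

lemma reflRoot_self (α : V) : reflRoot α α = -α := by
  rw [reflRoot_eq_reflection, Submodule.reflection_orthogonalComplement_singleton_eq_neg]

lemma reflRoot_of_inner_eq_zero {α v : V} (h : ⟪α, v⟫ = 0) : reflRoot α v = v := by
  simp [reflRoot, pairing, real_inner_comm, h]

lemma reflRoot_add_left_self {x y : V} (h : ‖x‖ = ‖y‖) : reflRoot (x + y) x = -y := by
  rw [reflRoot_eq_reflection, ← sub_neg_eq_add,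
    Submodule.reflection_sub (by rwa [norm_neg])]

lemma inner_reflRoot_reflRoot (α v w : V) : ⟪reflRoot α v, reflRoot α w⟫ = ⟪v, w⟫ := by
  simp only [reflRoot_eq_reflection, LinearIsometryEquiv.inner_map_map]

lemma pairing_add_left (β γ α : V) : pairing (β + γ) α = pairing β α + pairing γ α := by
  simp only [pairing, inner_add_left]
  ring

lemma IsSubRS.neg_mem {Φ Δ : Set V} (h : IsSubRS Φ Δ) {x : V} (hx : x ∈ Δ) : -x ∈ Δ :=
  reflRoot_self x ▸ h.2.2 x hx x hx

lemma IsSubRS.neg_mem_iff {Φ Δ : Set V} (h : IsSubRS Φ Δ) {x : V} : -x ∈ Δ ↔ x ∈ Δ :=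
  ⟨fun hx => neg_neg x ▸ h.neg_mem hx, h.neg_mem⟩

lemma IsClosedSubRS.mem_of_add_mem {Φ Δ : Set V} (h : IsClosedSubRS Φ Δ) {x y : V}
    (hx : x ∈ Δ) (hxy : x + y ∈ Δ) (hy : y ∈ Φ) : y ∈ Δ := by
  have hsum : -x + (x + y) = y := neg_add_cancel_left x y
  exact hsum ▸ h.2 _ (h.1.neg_mem hx) _ hxy (hsum.symm ▸ hy)

lemma isClosedSubRS_inter {Φ : Set V} (L : AddSubgroup V) (hne : ((L : Set V) ∩ Φ).Nonempty)
    (hrefl : ∀ α ∈ Φ, ∀ β ∈ Φ, reflRoot α β ∈ Φ)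
    (hint : ∀ α ∈ Φ, ∀ β ∈ Φ, ∃ m : ℤ, pairing β α = m) :
    IsClosedSubRS Φ (L ∩ Φ) := by
  refine ⟨⟨hne, Set.inter_subset_right, ?_⟩, fun α hα β hβ hαβ => ⟨L.add_mem hα.1 hβ.1, hαβ⟩⟩
  rintro α ⟨hαL, hα⟩ β ⟨hβL, hβ⟩
  obtain ⟨m, hm⟩ := hint α hα β hβ
  refine ⟨?_, hrefl α hα β hβ⟩
  rw [reflRoot, hm, Int.cast_smul_eq_zsmul]
  exact L.sub_mem hβL (L.zsmul_mem hαL m)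

section TypeBC

variable {n : ℕ}

lemma inner_eps_eps (i j : Fin n) : ⟪(eps i : E n), eps j⟫ = if i = j then 1 else 0 := by
  simp [eps, EuclideanSpace.inner_single_left]

lemma eps_mem_shortBC (i : Fin n) : eps i ∈ shortBC n := ⟨i, Or.inl rfl⟩

lemma neg_mem_shortBC {x : E n} (hx : x ∈ shortBC n) : -x ∈ shortBC n := by
  obtain ⟨i, rfl | rfl⟩ := hx
  · exact ⟨i, Or.inr rfl⟩
  · exact ⟨i, Or.inl (neg_neg _)⟩

lemma mem_shortBC_iff_exists_smul {v : E n} :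
    v ∈ shortBC n ↔ ∃ (i : Fin n) (c : ℝ), (c = 1 ∨ c = -1) ∧ v = c • eps i := by
  simp [shortBC, or_and_right, exists_or]

lemma norm_eq_one_of_mem_shortBC {x : E n} (hx : x ∈ shortBC n) : ‖x‖ = 1 := by
  obtain ⟨i, rfl | rfl⟩ := hx <;> simp [eps]

lemma eq_or_eq_neg_or_inner_eq_zero {x z : E n} (hx : x ∈ shortBC n) (hz : z ∈ shortBC n) :
    z = x ∨ z = -x ∨ ⟪x, z⟫ = 0 := by
  obtain ⟨i, hi⟩ := hx
  obtain ⟨j, hj⟩ := hz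
  by_cases hij : i = j
  · subst hij
    rcases hi with rfl | rfl <;> rcases hj with rfl | rfl <;> simp
  · rcases hi with rfl | rfl <;> rcases hj with rfl | rfl <;> simp [inner_eps_eps, hij]

lemma exists_inner_eq_intCast {x z : E n} (hx : x ∈ shortBC n) (hz : z ∈ shortBC n) :
    ∃ m : ℤ, ⟪z, x⟫ = m := by
  have hxx : ⟪x, x⟫ = 1 := inner_self_eq_one_of_norm_eq_one (norm_eq_one_of_mem_shortBC hx)
  rcases eq_or_eq_neg_or_inner_eq_zero hx hz with rfl | rfl | h
  · exact ⟨1, by simpa using hxx⟩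
  · exact ⟨-1, by simpa using hxx⟩
  · exact ⟨0, by simpa [real_inner_comm] using h⟩

lemma mem_longBC_iff {v : E n} :
    v ∈ longBC n ↔ ∃ x ∈ shortBC n, ∃ y ∈ shortBC n, ⟪x, y⟫ = 0 ∧ v = x + y := by
  constructor
  · rintro ⟨i, j, hij, c, d, hc, hd, rfl⟩
    exact ⟨_, mem_shortBC_iff_exists_smul.2 ⟨i, c, hc, rfl⟩, _,
      mem_shortBC_iff_exists_smul.2 ⟨j, d, hd, rfl⟩,
      by simp [real_inner_smul_left, real_inner_smul_right, inner_eps_eps, hij], rfl⟩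
  · rintro ⟨x, hx, y, hy, hxy, rfl⟩
    obtain ⟨i, c, hc, rfl⟩ := mem_shortBC_iff_exists_smul.1 hx
    obtain ⟨j, d, hd, rfl⟩ := mem_shortBC_iff_exists_smul.1 hy
    have hij : i ≠ j := by
      rintro rfl
      rw [real_inner_smul_left, real_inner_smul_right, inner_eps_eps, if_pos rfl] at hxy
      rcases hc with rfl | rfl <;> rcases hd with rfl | rfl <;> norm_num at hxy
    exact ⟨i, j, hij, c, d, hc, hd, rfl⟩

lemma mem_divBC_iff {v : E n} : v ∈ divBC n ↔ ∃ x ∈ shortBC n, v = (2 : ℝ) • x := by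
  constructor
  · rintro ⟨i, rfl | rfl⟩
    · exact ⟨eps i, eps_mem_shortBC i, rfl⟩
    · exact ⟨-eps i, neg_mem_shortBC (eps_mem_shortBC i), (smul_neg _ _).symm⟩
  · rintro ⟨_, ⟨i, rfl | rfl⟩, rfl⟩
    · exact ⟨i, Or.inl rfl⟩
    · exact ⟨i, Or.inr (smul_neg _ _)⟩

lemma Bn_subset_BCn : Bn n ⊆ BCn n := Set.subset_union_left

lemma eps_add_eps_mem_longBC {i j : Fin n} (hij : i ≠ j) : (eps i + eps j : E n) ∈ longBC n :=
  mem_longBC_iff.2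
    ⟨_, eps_mem_shortBC i, _, eps_mem_shortBC j, by rw [inner_eps_eps, if_neg hij], rfl⟩

lemma mem_shortBC_or_exists_eq_add {v : E n} (hv : v ∈ BCn n) :
    v ∈ shortBC n ∨ ∃ x ∈ shortBC n, ∃ y ∈ shortBC n, v = x + y := by
  obtain (hv | hv) | hv := hv
  · exact Or.inl hv
  · obtain ⟨x, hx, y, hy, -, rfl⟩ := mem_longBC_iff.1 hv
    exact Or.inr ⟨x, hx, y, hy, rfl⟩
  · obtain ⟨x, hx, rfl⟩ := mem_divBC_iff.1 hv
    exact Or.inr ⟨x, hx, x, hx, two_smul ℝ x⟩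

lemma reflRoot_mem_shortBC_of_short {x z : E n} (hx : x ∈ shortBC n) (hz : z ∈ shortBC n) :
    reflRoot x z ∈ shortBC n := by
  rcases eq_or_eq_neg_or_inner_eq_zero hx hz with rfl | rfl | h
  · rw [reflRoot_self]
    exact neg_mem_shortBC hx
  · rwa [reflRoot_neg_right, reflRoot_self, neg_neg]
  · rwa [reflRoot_of_inner_eq_zero h]

lemma reflRoot_add_mem_shortBC {x y z : E n} (hx : x ∈ shortBC n) (hy : y ∈ shortBC n)
    (hz : z ∈ shortBC n) : reflRoot (x + y) z ∈ shortBC n := by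
  have hnorm : ‖x‖ = ‖y‖ := by rw [norm_eq_one_of_mem_shortBC hx, norm_eq_one_of_mem_shortBC hy]
  have hrefl_x : reflRoot (x + y) x = -y := reflRoot_add_left_self hnorm
  have hrefl_y : reflRoot (x + y) y = -x := by
    rw [add_comm, reflRoot_add_left_self hnorm.symm]
  rcases eq_or_eq_neg_or_inner_eq_zero hx hz with rfl | rfl | hxz
  · exact hrefl_x ▸ neg_mem_shortBC hy
  · rwa [reflRoot_neg_right, hrefl_x, neg_neg]
  rcases eq_or_eq_neg_or_inner_eq_zero hy hz with rfl | rfl | hyz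
  · exact hrefl_y ▸ neg_mem_shortBC hx
  · rwa [reflRoot_neg_right, hrefl_y, neg_neg]
  · rwa [reflRoot_of_inner_eq_zero (by rw [inner_add_left, hxz, hyz, add_zero])]

lemma reflRoot_mem_shortBC {α z : E n} (hα : α ∈ BCn n) (hz : z ∈ shortBC n) :
    reflRoot α z ∈ shortBC n := by
  obtain hα | ⟨x, hx, y, hy, rfl⟩ := mem_shortBC_or_exists_eq_add hα
  · exact reflRoot_mem_shortBC_of_short hα hz
  · exact reflRoot_add_mem_shortBC hx hy hz

lemma reflRoot_mem_longBC {α β : E n} (hα : α ∈ BCn n) (hβ : β ∈ longBC n) :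
    reflRoot α β ∈ longBC n := by
  obtain ⟨x, hx, y, hy, hxy, rfl⟩ := mem_longBC_iff.1 hβ
  refine mem_longBC_iff.2 ⟨_, reflRoot_mem_shortBC hα hx, _, reflRoot_mem_shortBC hα hy, ?_, ?_⟩
  · rwa [inner_reflRoot_reflRoot]
  · simp only [reflRoot_eq_reflection, map_add]

lemma reflRoot_mem_divBC {α β : E n} (hα : α ∈ BCn n) (hβ : β ∈ divBC n) :
    reflRoot α β ∈ divBC n := by
  obtain ⟨x, hx, rfl⟩ := mem_divBC_iff.1 hβ
  refine mem_divBC_iff.2 ⟨_, reflRoot_mem_shortBC hα hx, ?_⟩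
  simp only [reflRoot_eq_reflection, map_smul]

lemma reflRoot_mem_Bn {α β : E n} (hα : α ∈ BCn n) (hβ : β ∈ Bn n) : reflRoot α β ∈ Bn n :=
  hβ.imp (reflRoot_mem_shortBC hα) (reflRoot_mem_longBC hα)

lemma reflRoot_mem_BCn {α β : E n} (hα : α ∈ BCn n) (hβ : β ∈ BCn n) : reflRoot α β ∈ BCn n :=
  hβ.imp (reflRoot_mem_Bn hα) (reflRoot_mem_divBC hα)

lemma exists_pairing_short_eq_intCast {α z : E n} (hα : α ∈ BCn n) (hz : z ∈ shortBC n) :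
    ∃ m : ℤ, pairing z α = m := by
  obtain (hα | hα) | hα := hα
  · obtain ⟨m, hm⟩ := exists_inner_eq_intCast hα hz
    exact ⟨2 * m, by simp [pairing, hm, norm_eq_one_of_mem_shortBC hα]⟩
  · obtain ⟨x, hx, y, hy, hxy, rfl⟩ := mem_longBC_iff.1 hα
    obtain ⟨m, hm⟩ := exists_inner_eq_intCast hx hz
    obtain ⟨k, hk⟩ := exists_inner_eq_intCast hy hz
    have hnorm : ⟪x + y, x + y⟫ = 2 := by
      rw [real_inner_add_add_self, hxy, real_inner_self_eq_norm_sq, real_inner_self_eq_norm_sq,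
        norm_eq_one_of_mem_shortBC hx, norm_eq_one_of_mem_shortBC hy]
      norm_num
    refine ⟨m + k, ?_⟩
    rw [pairing, hnorm, inner_add_right, hm, hk, mul_div_cancel_left₀ _ two_ne_zero, Int.cast_add]
  · obtain ⟨x, hx, rfl⟩ := mem_divBC_iff.1 hα
    obtain ⟨m, hm⟩ := exists_inner_eq_intCast hx hz
    refine ⟨m, ?_⟩
    rw [pairing, real_inner_self_eq_norm_sq, norm_smul, norm_eq_one_of_mem_shortBC hx,
      real_inner_smul_right, hm, Real.norm_two]
    ring

lemma exists_pairing_eq_intCast {α β : E n} (hα : α ∈ BCn n) (hβ : β ∈ BCn n) :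
    ∃ m : ℤ, pairing β α = m := by
  obtain hβ | ⟨x, hx, y, hy, rfl⟩ := mem_shortBC_or_exists_eq_add hβ
  · exact exists_pairing_short_eq_intCast hα hβ
  · obtain ⟨m, hm⟩ := exists_pairing_short_eq_intCast hα hx
    obtain ⟨k, hk⟩ := exists_pairing_short_eq_intCast hα hy
    exact ⟨m + k, by rw [pairing_add_left, hm, hk, Int.cast_add]⟩

/-- The additive group of vectors whose coordinates indexed by `T` sum to an even integer. It cuts
out the maximal closed subroot system of `B_n` or `BC_n` that omits `±εᵢ` exactly for `i ∈ T`. -/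
def evenSubgroup (T : Finset (Fin n)) : AddSubgroup (E n) where
  carrier := {v | ∃ m : ℤ, ∑ j ∈ T, v j = 2 * m}
  zero_mem' := ⟨0, by simp⟩
  add_mem' := by
    rintro v w ⟨a, ha⟩ ⟨b, hb⟩
    exact ⟨a + b, by simp [Finset.sum_add_distrib, ha, hb, mul_add]⟩
  neg_mem' := by
    rintro v ⟨a, ha⟩
    exact ⟨-a, by simp [ha]⟩

lemma mem_evenSubgroup_iff_even {T : Finset (Fin n)} {v : E n} {k : ℤ}
    (hk : ∑ j ∈ T, v j = k) : v ∈ evenSubgroup T ↔ Even k := by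
  change (∃ m : ℤ, ∑ j ∈ T, v j = 2 * m) ↔ _
  rw [hk, even_iff_exists_two_mul]
  norm_cast

lemma sum_eps_apply (T : Finset (Fin n)) (i : Fin n) :
    ∑ j ∈ T, (eps i : E n) j = if i ∈ T then 1 else 0 := by
  simp [eps]

lemma eps_mem_evenSubgroup_iff {T : Finset (Fin n)} {i : Fin n} :
    eps i ∈ evenSubgroup T ↔ i ∉ T := by
  rw [mem_evenSubgroup_iff_even (k := if i ∈ T then 1 else 0) (by simp [sum_eps_apply])]
  split_ifs with hi <;> simp [hi]

lemma exists_sum_apply_eq_intCast (T : Finset (Fin n)) {x : E n} (hx : x ∈ shortBC n) :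
    ∃ k : ℤ, ∑ j ∈ T, x j = k := by
  obtain ⟨i, rfl | rfl⟩ := hx
  · exact ⟨if i ∈ T then 1 else 0, by simp [sum_eps_apply]⟩
  · exact ⟨-if i ∈ T then 1 else 0, by simp [sum_eps_apply]⟩

lemma add_mem_evenSubgroup_iff {T : Finset (Fin n)} {x y : E n} (hx : x ∈ shortBC n)
    (hy : y ∈ shortBC n) :
    x + y ∈ evenSubgroup T ↔ (x ∈ evenSubgroup T ↔ y ∈ evenSubgroup T) := by
  obtain ⟨k, hk⟩ := exists_sum_apply_eq_intCast T hx
  obtain ⟨l, hl⟩ := exists_sum_apply_eq_intCast T hy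
  have hkl : ∑ j ∈ T, (x + y) j = (k + l : ℤ) := by simp [Finset.sum_add_distrib, hk, hl]
  rw [mem_evenSubgroup_iff_even hkl, mem_evenSubgroup_iff_even hk, mem_evenSubgroup_iff_even hl,
    Int.even_add]

lemma divBC_subset_evenSubgroup (T : Finset (Fin n)) : divBC n ⊆ evenSubgroup T := by
  intro v hv
  obtain ⟨x, hx, rfl⟩ := mem_divBC_iff.1 hv
  rw [two_smul]
  exact (add_mem_evenSubgroup_iff hx hx).2 Iff.rfl

lemma evenSubgroup_inter_BCn (T : Finset (Fin n)) :
    (evenSubgroup T : Set (E n)) ∩ BCn n = divBC n ∪ (evenSubgroup T : Set (E n)) ∩ Bn n := by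
  rw [show BCn n = Bn n ∪ divBC n from rfl, Set.inter_union_distrib_left,
    Set.inter_eq_right.2 (divBC_subset_evenSubgroup T), Set.union_comm]

lemma eq_evenSubgroup_inter_BCn_iff {T : Finset (Fin n)} {Δ : Set (E n)} (hΔ : Δ ⊆ BCn n) :
    Δ = (evenSubgroup T : Set (E n)) ∩ BCn n ↔
      divBC n ⊆ Δ ∧ Δ ∩ Bn n = (evenSubgroup T : Set (E n)) ∩ Bn n := by
  constructor
  · rintro rfl
    refine ⟨evenSubgroup_inter_BCn T ▸ Set.subset_union_left, ?_⟩
    rw [Set.inter_assoc, Set.inter_eq_right.2 Bn_subset_BCn]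
  · rintro ⟨hdiv, hΔB⟩
    calc Δ = Δ ∩ (Bn n ∪ divBC n) := (Set.inter_eq_left.2 hΔ).symm
      _ = divBC n ∪ Δ ∩ Bn n := by
        rw [Set.inter_union_distrib_left, Set.inter_eq_right.2 hdiv, Set.union_comm]
      _ = _ := by rw [hΔB, evenSubgroup_inter_BCn]

end TypeBC

section Classification

variable {n : ℕ} {R Δ : Set (E n)} {S T : Finset (Fin n)}

lemma nonempty_evenSubgroup_inter (hn : 2 ≤ n) (hBR : Bn n ⊆ R) (T : Finset (Fin n)) :
    ((evenSubgroup T : Set (E n)) ∩ R).Nonempty := by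
  by_cases hT : ∃ i, i ∉ T
  · obtain ⟨i, hi⟩ := hT
    exact ⟨eps i, eps_mem_evenSubgroup_iff.2 hi, hBR (Or.inl (eps_mem_shortBC i))⟩
  · push Not at hT
    have : Nontrivial (Fin n) := Fin.nontrivial_iff_two_le.2 hn
    obtain ⟨i, j, hij⟩ := exists_pair_ne (Fin n)
    refine ⟨eps i + eps j, ?_, hBR (Or.inr (eps_add_eps_mem_longBC hij))⟩
    exact (add_mem_evenSubgroup_iff (eps_mem_shortBC i) (eps_mem_shortBC j)).2
      (by simp only [eps_mem_evenSubgroup_iff, hT])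

lemma evenSubgroup_inter_ne (hBR : Bn n ⊆ R) (hT : T.Nonempty) :
    (evenSubgroup T : Set (E n)) ∩ R ≠ R := by
  obtain ⟨i, hi⟩ := hT
  intro h
  exact eps_mem_evenSubgroup_iff.1
    (Set.inter_eq_right.1 h (hBR (Or.inl (eps_mem_shortBC i)))) hi

lemma eq_of_evenSubgroup_inter_subset (hBR : Bn n ⊆ R) (hS : S.Nonempty)
    (h : (evenSubgroup T : Set (E n)) ∩ R ⊆ evenSubgroup S) : T = S := by
  have hST : S ⊆ T := by
    intro i hi
    by_contra hiT
    exact eps_mem_evenSubgroup_iff.1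
      (h ⟨eps_mem_evenSubgroup_iff.2 hiT, hBR (Or.inl (eps_mem_shortBC i))⟩) hi
  refine Finset.Subset.antisymm (fun j hjT => ?_) hST
  by_contra hjS
  obtain ⟨k, hkS⟩ := hS
  have hjk : j ≠ k := fun hjk => hjS (hjk ▸ hkS)
  have hparity (U : Finset (Fin n)) : eps j + eps k ∈ evenSubgroup U ↔ (j ∈ U ↔ k ∈ U) := by
    rw [add_mem_evenSubgroup_iff (eps_mem_shortBC j) (eps_mem_shortBC k),
      eps_mem_evenSubgroup_iff, eps_mem_evenSubgroup_iff, not_iff_not]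
  have hmem : eps j + eps k ∈ evenSubgroup S :=
    h ⟨(hparity T).2 (iff_of_true hjT (hST hkS)), hBR (Or.inr (eps_add_eps_mem_longBC hjk))⟩
  exact hjS (((hparity S).1 hmem).2 hkS)

lemma IsClosedSubRS.eq_of_shortBC_subset (hRBC : R ⊆ BCn n) (h : IsClosedSubRS R Δ)
    (hshort : shortBC n ⊆ Δ) : Δ = R := by
  refine Set.Subset.antisymm h.1.2.1 fun v hv => ?_
  obtain hvS | ⟨x, hx, y, hy, rfl⟩ := mem_shortBC_or_exists_eq_add (hRBC hv)
  · exact hshort hvS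
  · exact h.2 x (hshort hx) y (hshort hy) hv

lemma IsClosedSubRS.subset_evenSubgroup (hBR : Bn n ⊆ R) (hRBC : R ⊆ BCn n)
    (h : IsClosedSubRS R Δ) (hT : ∀ i, i ∈ T ↔ eps i ∉ Δ) : Δ ⊆ evenSubgroup T := by
  have hshort {x : E n} (hx : x ∈ shortBC n) : x ∈ evenSubgroup T ↔ x ∈ Δ := by
    obtain ⟨i, rfl | rfl⟩ := hx
    · rw [eps_mem_evenSubgroup_iff, hT, not_not]
    · rw [neg_mem_iff, h.1.neg_mem_iff, eps_mem_evenSubgroup_iff, hT, not_not]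
  intro v hv
  obtain hvS | ⟨x, hx, y, hy, rfl⟩ := mem_shortBC_or_exists_eq_add (hRBC (h.1.2.1 hv))
  · exact (hshort hvS).2 hv
  · have hxy : x ∈ Δ ↔ y ∈ Δ :=
      ⟨fun hxΔ => h.mem_of_add_mem hxΔ hv (hBR (Or.inl hy)),
        fun hyΔ => h.mem_of_add_mem hyΔ (add_comm x y ▸ hv) (hBR (Or.inl hx))⟩
    exact (add_mem_evenSubgroup_iff hx hy).2 (by rw [hshort hx, hshort hy, hxy])

open Classical in
lemma IsClosedSubRS.exists_subset_evenSubgroup (hBR : Bn n ⊆ R) (hRBC : R ⊆ BCn n)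
    (h : IsClosedSubRS R Δ) (hne : Δ ≠ R) :
    ∃ T : Finset (Fin n), T.Nonempty ∧ Δ ⊆ evenSubgroup T := by
  refine ⟨Finset.univ.filter fun i => eps i ∉ Δ, Finset.filter_nonempty_iff.2 ?_,
    h.subset_evenSubgroup hBR hRBC (by simp)⟩
  by_contra! heps
  refine hne (h.eq_of_shortBC_subset hRBC ?_)
  rintro _ ⟨i, rfl | rfl⟩
  · exact heps i (Finset.mem_univ i)
  · exact h.1.neg_mem (heps i (Finset.mem_univ i))

lemma isMaxClosedSubRS_iff (hn : 2 ≤ n) (hBR : Bn n ⊆ R) (hRBC : R ⊆ BCn n)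
    (hrefl : ∀ α ∈ R, ∀ β ∈ R, reflRoot α β ∈ R) (Δ : Set (E n)) :
    IsMaxClosedSubRS R Δ ↔
      ∃ T : Finset (Fin n), T.Nonempty ∧ Δ = (evenSubgroup T : Set (E n)) ∩ R := by
  have hclosed (T : Finset (Fin n)) : IsClosedSubRS R (evenSubgroup T ∩ R) :=
    isClosedSubRS_inter _ (nonempty_evenSubgroup_inter hn hBR T) hrefl
      fun α hα β hβ => exists_pairing_eq_intCast (hRBC hα) (hRBC hβ)
  constructor
  · rintro ⟨hΔ, hne, hmax⟩
    obtain ⟨T, hT, hΔT⟩ := hΔ.exists_subset_evenSubgroup hBR hRBC hne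
    exact ⟨T, hT, (hmax _ (hclosed T) (evenSubgroup_inter_ne hBR hT)
      (Set.subset_inter hΔT hΔ.1.2.1)).symm⟩
  · rintro ⟨T, hT, rfl⟩
    refine ⟨hclosed T, evenSubgroup_inter_ne hBR hT, fun Δ' hΔ' hne hTΔ' => ?_⟩
    obtain ⟨S, hS, hΔ'S⟩ := hΔ'.exists_subset_evenSubgroup hBR hRBC hne
    obtain rfl : T = S := eq_of_evenSubgroup_inter_subset hBR hS (hTΔ'.trans hΔ'S)
    exact Set.Subset.antisymm (Set.subset_inter hΔ'S hΔ'.1.2.1) hTΔ'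

end Classification

/-- Corollary 3.6: maximal closed subroot systems of `BC_n`. -/
theorem statement9 {n : ℕ} (hn : 2 ≤ n) (Δ : Set (E n)) (hΔ : Δ ⊆ BCn n) :
    (IsMaxClosedSubRS (BCn n) Δ ↔
      divBC n ⊆ Δ ∧ IsMaxClosedSubRS (Bn n) (Δ ∩ Bn n)) ∧
    (IsMaxClosedSubRS (BCn n) Δ ↔
      ∃ Δ'' : Set (E n), IsMaxClosedSubRS (Bn n) Δ'' ∧ Δ = divBC n ∪ Δ'') := by
  have classify_BC := isMaxClosedSubRS_iff hn Bn_subset_BCn subset_rfl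
    (fun α hα β => reflRoot_mem_BCn hα) Δ
  have classify_B := isMaxClosedSubRS_iff hn subset_rfl Bn_subset_BCn
    fun α hα β => reflRoot_mem_Bn (Bn_subset_BCn hα)
  constructor
  · rw [classify_BC, classify_B, ← exists_and_left]
    exact exists_congr fun T => by rw [eq_evenSubgroup_inter_BCn_iff hΔ, and_left_comm]
  · rw [classify_BC]
    constructor
    · rintro ⟨T, hT, rfl⟩
      exact ⟨_, (classify_B _).2 ⟨T, hT, rfl⟩, evenSubgroup_inter_BCn T⟩
    · rintro ⟨Δ'', hΔ'', rfl⟩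
      obtain ⟨T, hT, rfl⟩ := (classify_B Δ'').1 hΔ''
      exact ⟨T, hT, (evenSubgroup_inter_BCn T).symm⟩

end BdS
end
end

section
/- Let Φ̊ be a reduced irreducible root system in V in which all roots have the same length and with |Φ̊| > 2 (i.e. Φ̊ is simply-laced and not of type A₁), let (Λ_α) be an extension datum of type (Φ̊, Y), and let Φ^re be the associated set of real roots. Then Λ_α equals one fixed subset Λ for all α ∈ Φ̊, and Λ is an additive subgroup of Y. Moreover, Ψ ⊆ Φ^re is a maximal closed subroot system with Gr(Ψ) = Φ̊ if and only if there exist a maximal proper subgroup H of Λ and a ℤ-linear map τ : Φ̊ → Λ/H such that Ψ = {α ⊕ y : α ∈ Φ̊, y ∈ Λ, y + H = τ(α)}. -/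
open scoped RealInnerProductSpace Pointwise

noncomputable section

namespace BdS

variable {V Y : Type*} [NormedAddCommGroup V] [InnerProductSpace ℝ V]
variable [AddCommGroup Y] [Module ℝ Y]

/-!
A reflection-stable `Ψ` with full gradient `Φ` is recovered from the subgroup `⟨Ψ⟩` of `V ⊕ Y` that
it generates: `Ψ` consists of the elements of `⟨Ψ⟩` whose gradient lies in `Φ`. Indeed, by
irreducibility, the differences of elements of `Ψ` with equal gradients form the same subset of `Y`
for every root, and translating by these differences preserves `Ψ`. Applied to `Φ^re` itself, this
shows that all `Λ_α` are one and the same subgroup `G`. Since the root lattice `⟨Φ⟩` is free, the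
projection `⟨Ψ⟩ → ⟨Φ⟩` has a section, whose `Y`-component `τ` exhibits `Ψ` as the union of the
cosets `τ α + H`, where `H` is the group of translations `0 ⊕ y` in `⟨Ψ⟩`. For fixed `τ` the passage
from `H` to `Ψ` is an order embedding, so maximality of `Ψ` is maximality of `H` in `G`.
-/

section Pairing

lemma pairing_neg_left (β α : V) : pairing (-β) α = -pairing β α := by
  simp only [pairing, inner_neg_left]
  ring

lemma pairing_self {α : V} (hα : α ≠ 0) : pairing α α = 2 := by
  have : ⟪α, α⟫ ≠ 0 := inner_self_ne_zero.2 hα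
  rw [pairing, mul_div_assoc, div_self this, mul_one]

lemma reflAff_eq_sub_zsmul {a x : V × Y} {m : ℤ} (h : pairing x.1 a.1 = m) :
    reflAff a x = x - m • a := by
  ext <;> simp [reflAff, reflRoot, h, Int.cast_smul_eq_zsmul]

end Pairing

lemma exists_mem_inner_pos_of_sum {B : Type*} [AddCommMonoid B] {s : Multiset (V × B)}
    (hs : s.sum.1 ≠ 0) :
    ∃ x ∈ s, 0 < ⟪s.sum.1, x.1⟫ := by
  by_contra! hnonpos
  let f : V × B →+ ℝ := (innerₛₗ ℝ s.sum.1).toAddMonoidHom.comp (AddMonoidHom.fst V B)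
  have hsum : f s.sum ≤ 0 := by
    rw [map_multiset_sum]
    simpa using
      Multiset.sum_le_card_nsmul (s.map f) 0 (Multiset.forall_mem_map_iff.2 hnonpos)
  exact hsum.not_gt (real_inner_self_pos.2 hs)

/-- A simply-laced root system, possibly infinite, reducible or not spanning `V`: a set of nonzero
vectors of one common length, stable under its reflections, with integral Cartan numbers. -/
structure IsSimplyLaced (Φ : Set V) : Prop where
  zero_notMem : (0 : V) ∉ Φ
  reflRoot_mem : ∀ α ∈ Φ, ∀ β ∈ Φ, reflRoot α β ∈ Φ
  pairing_int : ∀ α ∈ Φ, ∀ β ∈ Φ, ∃ m : ℤ, pairing β α = m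
  inner_self_eq : ∀ α ∈ Φ, ∀ β ∈ Φ, ⟪α, α⟫ = ⟪β, β⟫

lemma IsRootSystem.isSimplyLaced {Φ : Set V} (hΦ : IsRootSystem Φ)
    (hlen : ∀ α ∈ Φ, ∀ β ∈ Φ, ⟪α, α⟫ = ⟪β, β⟫) : IsSimplyLaced Φ :=
  ⟨hΦ.2.1, hΦ.2.2.2.1, hΦ.2.2.2.2, hlen⟩

lemma IsIrreducible.induction_on_nonorthogonal {Φ : Set V} (hirr : IsIrreducible Φ) {p : V → Prop}
    {α : V} (hα : α ∈ Φ) (base : p α)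
    (step : ∀ β ∈ Φ, ∀ γ ∈ Φ, ⟪β, γ⟫ ≠ 0 → p β → p γ) : ∀ β ∈ Φ, p β := by
  have hunion : Φ = {β ∈ Φ | p β} ∪ {β ∈ Φ | ¬p β} := by
    ext β
    simp only [Set.mem_union, Set.mem_ofPred_eq]
    tauto
  have horth : ∀ β ∈ {β ∈ Φ | p β}, ∀ γ ∈ {β ∈ Φ | ¬p β}, ⟪β, γ⟫ = 0 := by
    rintro β ⟨hβ, hpβ⟩ γ ⟨hγ, hpγ⟩
    by_contra hne
    exact hpγ (step β hβ γ hγ hne hpβ)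
  rcases hirr _ _ hunion horth with h | h
  · exact absurd ⟨hα, base⟩ (Set.eq_empty_iff_forall_notMem.1 h α)
  · intro β hβ
    by_contra hpβ
    exact Set.eq_empty_iff_forall_notMem.1 h β ⟨hβ, hpβ⟩

namespace IsSimplyLaced

variable {Φ : Set V} {α β : V} (hΦ : IsSimplyLaced Φ)
include hΦ

lemma ne_zero (hα : α ∈ Φ) : α ≠ 0 :=
  ne_of_mem_of_not_mem hα hΦ.zero_notMem

lemma pairing_comm (hα : α ∈ Φ) (hβ : β ∈ Φ) : pairing α β = pairing β α := by
  rw [pairing, pairing, hΦ.inner_self_eq α hα β hβ, real_inner_comm]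

lemma neg_mem (hα : α ∈ Φ) : -α ∈ Φ := by
  simpa [reflRoot, pairing_self (hΦ.ne_zero hα), two_smul] using hΦ.reflRoot_mem α hα α hα

lemma mem_ndSet (hα : α ∈ Φ) : α ∈ ndSet Φ := by
  refine ⟨hα, fun hdiv => ?_⟩
  have hlen := hΦ.inner_self_eq α hα _ hdiv.2
  rw [real_inner_smul_left, real_inner_smul_right] at hlen
  linarith [real_inner_self_pos.2 (hΦ.ne_zero hα)]

lemma eq_or_pairing_eq_one_of_inner_pos (hα : α ∈ Φ) (hβ : β ∈ Φ) (hpos : 0 < ⟪β, α⟫) :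
    β = α ∨ pairing β α = 1 := by
  obtain ⟨m, hm⟩ := hΦ.pairing_int α hα β hβ
  have hαα : 0 < ⟪α, α⟫ := real_inner_self_pos.2 (hΦ.ne_zero hα)
  have hβα : 2 * ⟪β, α⟫ = m * ⟪α, α⟫ := by rw [← hm, pairing, div_mul_cancel₀ _ hαα.ne']
  have hdist : ⟪β - α, β - α⟫ = (2 - m) * ⟪α, α⟫ := by
    rw [real_inner_sub_sub_self, hΦ.inner_self_eq β hβ α hα]
    linarith
  have hm_pos : (0 : ℝ) < m := pos_of_mul_pos_left (hβα ▸ by positivity) hαα.le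
  have hm_le : (0 : ℝ) ≤ 2 - m :=
    nonneg_of_mul_nonneg_left (hdist ▸ real_inner_self_nonneg) hαα
  obtain rfl | rfl : m = 1 ∨ m = 2 := by
    have : 0 < m := by exact_mod_cast hm_pos
    have : 0 ≤ 2 - m := by exact_mod_cast hm_le
    omega
  · exact Or.inr (by simpa using hm)
  · refine Or.inl (sub_eq_zero.1 ((inner_self_eq_zero (𝕜 := ℝ)).1 ?_))
    rw [hdist]
    norm_num

lemma eq_or_eq_neg_or_pairing_of_inner_ne_zero (hα : α ∈ Φ) (hβ : β ∈ Φ) (hne : ⟪β, α⟫ ≠ 0) :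
    (β = α ∨ pairing β α = 1) ∨ β = -α ∨ pairing β α = -1 := by
  rcases hne.lt_or_gt with hneg | hpos
  · rw [← neg_eq_iff_eq_neg, ← neg_eq_iff_eq_neg (a := pairing β α), ← pairing_neg_left]
    refine Or.inr (hΦ.eq_or_pairing_eq_one_of_inner_pos hα (hΦ.neg_mem hβ) ?_)
    rwa [inner_neg_left, neg_pos]
  · exact Or.inl (hΦ.eq_or_pairing_eq_one_of_inner_pos hα hβ hpos)

lemma exists_pairing_eq_neg_one (hirr : IsIrreducible Φ) (hcard : 2 < Φ.encard) (hα : α ∈ Φ) :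
    ∃ β ∈ Φ, pairing β α = -1 := by
  by_contra! hnone
  have hsub : Φ ⊆ {α, -α} := by
    refine hirr.induction_on_nonorthogonal (p := fun β => β = α ∨ β = -α) hα (Or.inl rfl)
      fun β hβ γ hγ hne hβα => ?_
    have hγα : ⟪γ, α⟫ ≠ 0 := by
      rcases hβα with rfl | rfl <;> simpa [real_inner_comm] using hne
    rcases hΦ.eq_or_eq_neg_or_pairing_of_inner_ne_zero hα hγ hγα with (h | h) | h | h
    · exact Or.inl h
    · exact absurd (by rw [pairing_neg_left, h]) (hnone (-γ) (hΦ.neg_mem hγ))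
    · exact Or.inr h
    · exact absurd h (hnone γ hγ)
  refine hcard.not_ge ((Set.encard_le_encard hsub).trans ((Set.encard_insert_le _ _).trans_eq ?_))
  rw [Set.encard_singleton, one_add_one_eq_two]

end IsSimplyLaced

/-- A set `Ψ` of affine roots with full gradient `Φ`, stable under the reflections in its own
elements. Unlike in `IsSubSys`, neither properness nor an ambient set of real roots is imposed, so
`PhiRe Φ Λ` itself is an example. -/
structure IsFullSubSys (Φ : Set V) (Ψ : Set (V × Y)) : Prop where
  gr_eq : Gr Ψ = Φ
  reflAff_mem : ∀ a ∈ Ψ, ∀ x ∈ Ψ, reflAff a x ∈ Ψ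

lemma isFullSubSys_phiRe {Φ : Set V} (hrefl : ∀ α ∈ Φ, ∀ β ∈ Φ, reflRoot α β ∈ Φ) {Λ : V → Set Y}
    (hΛ : ∀ α ∈ Φ, ∀ β ∈ Φ, ∀ z ∈ Λ α, ∀ y ∈ Λ β, y - pairing β α • z ∈ Λ (reflRoot α β))
    (hne : ∀ α ∈ Φ, (Λ α).Nonempty) : IsFullSubSys Φ (PhiRe Φ Λ) where
  gr_eq := Set.ext fun α => ⟨fun ⟨_, hα, _⟩ => hα, fun hα => (hne α hα).imp fun _ hy => ⟨hα, hy⟩⟩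
  reflAff_mem := fun _ ⟨hα, hz⟩ _ ⟨hβ, hy⟩ => ⟨hrefl _ hα _ hβ, hΛ _ hα _ hβ _ hz _ hy⟩

namespace IsFullSubSys

variable {Φ : Set V} {Ψ : Set (V × Y)}

lemma zset_nonempty (hΨ : IsFullSubSys Φ Ψ) {α : V} (hα : α ∈ Φ) : (Zset Ψ α).Nonempty := by
  rwa [← hΨ.gr_eq] at hα

lemma fst_mem (hΨ : IsFullSubSys Φ Ψ) {x : V × Y} (hx : x ∈ Ψ) : x.1 ∈ Φ :=
  hΨ.gr_eq ▸ ⟨x.2, hx⟩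

lemma sub_mem (hΨ : IsFullSubSys Φ Ψ) {a x : V × Y} (ha : a ∈ Ψ) (hx : x ∈ Ψ)
    (h : pairing x.1 a.1 = 1) : x - a ∈ Ψ := by
  have := hΨ.reflAff_mem a ha x hx
  rwa [reflAff_eq_sub_zsmul (m := 1) (by simpa using h), one_zsmul] at this

lemma add_mem (hΨ : IsFullSubSys Φ Ψ) {a x : V × Y} (ha : a ∈ Ψ) (hx : x ∈ Ψ)
    (h : pairing x.1 a.1 = -1) : x + a ∈ Ψ := by
  have := hΨ.reflAff_mem a ha x hx
  rwa [reflAff_eq_sub_zsmul (m := -1) (by simpa using h), neg_one_zsmul, sub_neg_eq_add] at this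

variable (hΨ : IsFullSubSys Φ Ψ) (hΦ : IsSimplyLaced Φ)
include hΨ hΦ

lemma neg_mem {x : V × Y} (hx : x ∈ Ψ) : -x ∈ Ψ := by
  have hpair : pairing x.1 x.1 = (2 : ℤ) := by
    rw [pairing_self (hΦ.ne_zero (hΨ.fst_mem hx)), Int.cast_ofNat]
  have := hΨ.reflAff_mem x hx x hx
  rwa [reflAff_eq_sub_zsmul hpair, two_zsmul, sub_add_cancel_left] at this

lemma zset_neg (α : V) : Zset Ψ (-α) = -Zset Ψ α := by
  ext y
  refine ⟨fun hy => ?_, fun hy => ?_⟩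
  · simpa [Zset] using hΨ.neg_mem hΦ (show (-α, y) ∈ Ψ from hy)
  · simpa [Zset] using hΨ.neg_mem hΦ (show (α, -y) ∈ Ψ from hy)

lemma zset_sub_zset_neg (α : V) :
    Zset Ψ (-α) - Zset Ψ (-α) = Zset Ψ α - Zset Ψ α := by
  rw [hΨ.zset_neg hΦ, neg_sub_neg]

lemma add_mem_zset_of_pairing_eq_neg_one {α β : V} (hpair : pairing β α = -1) {z d : Y}
    (hz : z ∈ Zset Ψ α) (hd : d ∈ Zset Ψ β - Zset Ψ β) : z + d ∈ Zset Ψ α := by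
  obtain ⟨b, hb, b', hb', rfl⟩ := Set.mem_sub.1 hd
  have hα : α ∈ Φ := hΨ.fst_mem hz
  have hβ : β ∈ Φ := hΨ.fst_mem hb
  have hαβ : pairing α β = -1 := by rw [hΦ.pairing_comm hα hβ, hpair]
  have hsum : (α, z) + (β, b) ∈ Ψ := hΨ.add_mem hb hz hαβ
  have hpair' : pairing (α + β) β = 1 := by
    rw [pairing_add_left, hαβ, pairing_self (hΦ.ne_zero hβ)]
    norm_num
  simpa [Zset, add_sub_assoc] using hΨ.sub_mem hb' hsum hpair'

lemma zset_sub_zset_subset_of_inner_ne_zero {α β : V} (hα : α ∈ Φ) (hβ : β ∈ Φ)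
    (hne : ⟪β, α⟫ ≠ 0) : Zset Ψ β - Zset Ψ β ⊆ Zset Ψ α - Zset Ψ α := by
  have of_pairing {γ : V} (hpair : pairing γ α = -1) :
      Zset Ψ γ - Zset Ψ γ ⊆ Zset Ψ α - Zset Ψ α := fun d hd => by
    obtain ⟨z, hz⟩ := hΨ.zset_nonempty hα
    exact Set.mem_sub.2 ⟨z + d, hΨ.add_mem_zset_of_pairing_eq_neg_one hΦ hpair hz hd, z, hz,
      add_sub_cancel_left z d⟩
  rcases hΦ.eq_or_eq_neg_or_pairing_of_inner_ne_zero hα hβ hne with (rfl | h) | rfl | h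
  · exact subset_rfl
  · rw [← hΨ.zset_sub_zset_neg hΦ β]
    exact of_pairing (by rw [pairing_neg_left, h])
  · exact (hΨ.zset_sub_zset_neg hΦ α).subset
  · exact of_pairing h

variable (hirr : IsIrreducible Φ) (hcard : 2 < Φ.encard)
include hirr hcard

lemma add_mem_zset {α β : V} {z d : Y} (hz : z ∈ Zset Ψ α) (hd : d ∈ Zset Ψ β - Zset Ψ β) :
    z + d ∈ Zset Ψ α := by
  have hβ : β ∈ Φ := by
    obtain ⟨b, hb, -⟩ := Set.mem_sub.1 hd
    exact hΨ.fst_mem hb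
  have hd_all : ∀ γ ∈ Φ, d ∈ Zset Ψ γ - Zset Ψ γ :=
    hirr.induction_on_nonorthogonal hβ hd fun _ hγ _ hδ hne hdγ =>
      hΨ.zset_sub_zset_subset_of_inner_ne_zero hΦ hδ hγ hne hdγ
  obtain ⟨γ, hγ, hpair⟩ := hΦ.exists_pairing_eq_neg_one hirr hcard (hΨ.fst_mem hz)
  exact hΨ.add_mem_zset_of_pairing_eq_neg_one hΦ hpair hz (hd_all γ hγ)

lemma add_add_mem_of_fst_eq_neg {a b c : V × Y} (ha : a ∈ Ψ) (hb : b ∈ Ψ) (hc : c ∈ Ψ)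
    (hbc : c.1 = -b.1) : b + c + a ∈ Ψ := by
  have hc' : -c.2 ∈ Zset Ψ b.1 := by
    rw [← neg_eq_iff_eq_neg.2 hbc]
    exact hΨ.neg_mem hΦ hc
  have hd : b.2 + c.2 ∈ Zset Ψ b.1 - Zset Ψ b.1 :=
    Set.mem_sub.2 ⟨b.2, hb, -c.2, hc', sub_neg_eq_add _ _⟩
  have hsum : b + c + a = (a.1, a.2 + (b.2 + c.2)) := by
    ext <;> simp [hbc, add_comm]
  rw [hsum]
  exact hΨ.add_mem_zset hΦ hirr hcard ha hd

-- Induction on the number of summands: if `α` is the gradient of the sum, then some summand `a`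
-- has `⟪a.1, α⟫ > 0`. Either `α - a.1` is again a root, or `a.1 = α` and the other summands add up
-- to a pure translation, which is a difference of two elements of `Ψ` with equal gradients.
lemma multiset_sum_mem (s : Multiset (V × Y)) (hs : ∀ x ∈ s, x ∈ Ψ) (hsum : s.sum.1 ∈ Φ) :
    s.sum ∈ Ψ := by
  induction hn : s.card using Nat.strong_induction_on generalizing s with
  | _ n ih =>
  subst hn
  obtain ⟨a, ha, hpos⟩ := exists_mem_inner_pos_of_sum (hΦ.ne_zero hsum)
  obtain ⟨t, rfl⟩ := Multiset.exists_cons_of_mem ha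
  simp only [Multiset.mem_cons, forall_eq_or_imp] at hs
  obtain ⟨haΨ, htΨ⟩ := hs
  have haΦ := hΨ.fst_mem haΨ
  have hcons : (a ::ₘ t).sum = t.sum + a := by rw [Multiset.sum_cons, add_comm]
  rw [hcons] at hsum hpos ⊢
  rcases hΦ.eq_or_pairing_eq_one_of_inner_pos haΦ hsum hpos with heq | hpair
  · have ht0 : t.sum.1 = 0 := by simpa using heq
    rcases t.empty_or_exists_mem with rfl | ⟨b, hb⟩
    · simpa using haΨ
    obtain ⟨u, rfl⟩ := Multiset.exists_cons_of_mem hb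
    simp only [Multiset.mem_cons, forall_eq_or_imp] at htΨ
    obtain ⟨hbΨ, huΨ⟩ := htΨ
    have hu : u.sum.1 = -b.1 := by
      rwa [Multiset.sum_cons, Prod.fst_add, add_comm, add_eq_zero_iff_eq_neg] at ht0
    have huΨ' : u.sum ∈ Ψ :=
      ih _ (by simp) u huΨ (hu ▸ hΦ.neg_mem (hΨ.fst_mem hbΨ)) rfl
    rw [Multiset.sum_cons]
    exact hΨ.add_add_mem_of_fst_eq_neg hΦ hirr hcard haΨ hbΨ huΨ' hu
  · have hrefl := hΦ.reflRoot_mem _ haΦ _ hsum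
    rw [reflRoot, hpair, one_smul, Prod.fst_add, add_sub_cancel_right] at hrefl
    refine hΨ.add_mem haΨ (ih _ (by simp) t htΨ hrefl rfl) ?_
    rw [Prod.fst_add, pairing_add_left, pairing_self (hΦ.ne_zero haΦ)] at hpair
    linarith

lemma mem_iff_mem_closure {x : V × Y} (hx : x.1 ∈ Φ) :
    x ∈ Ψ ↔ x ∈ AddSubgroup.closure Ψ := by
  refine ⟨fun h => AddSubgroup.subset_closure h, fun h => ?_⟩
  have hneg : -Ψ ⊆ Ψ := fun y hy => by simpa using hΨ.neg_mem hΦ hy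
  rw [← AddSubgroup.mem_toAddSubmonoid, AddSubgroup.closure_toAddSubmonoid,
    Set.union_eq_self_of_subset_right hneg] at h
  obtain ⟨s, hs, rfl⟩ := AddSubmonoid.exists_multiset_of_mem_closure h
  exact hΨ.multiset_sum_mem hΦ hirr hcard s hs hx

end IsFullSubSys

section CosetSet

variable {A B : Type*} [AddCommGroup A] [AddCommGroup B] {Φ : Set A}

lemma sub_mem_cancel_right {H : AddSubgroup A} {a b : A} (ha : a ∈ H) : b - a ∈ H ↔ b ∈ H := by
  rw [sub_eq_add_neg, add_mem_cancel_right (neg_mem ha)]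

/-- The set of affine roots whose translation part lies in the coset `τ α + H`, where `α` is the
gradient and `τ` is additive on the root lattice. -/
def cosetSet (τ : AddSubgroup.closure Φ →+ B) (H : AddSubgroup B) : Set (A × B) :=
  {x | ∃ h : x.1 ∈ Φ, x.2 - τ ⟨x.1, AddSubgroup.subset_closure h⟩ ∈ H}

variable {τ : AddSubgroup.closure Φ →+ B} {G H K : AddSubgroup B}

lemma mk_mem_cosetSet {α : A} (hα : α ∈ Φ) {y : B} :
    (α, y) ∈ cosetSet τ H ↔ y - τ ⟨α, AddSubgroup.subset_closure hα⟩ ∈ H :=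
  ⟨fun ⟨_, h⟩ => h, fun h => ⟨hα, h⟩⟩

lemma lift_mem_cosetSet {α : A} (hα : α ∈ Φ) :
    (α, τ ⟨α, AddSubgroup.subset_closure hα⟩) ∈ cosetSet τ H := by
  simp [mk_mem_cosetSet hα]

lemma cosetSet_eq_setOf (hHG : H ≤ G) (hτ : ∀ x, τ x ∈ G) :
    cosetSet τ H = {x | ∃ h : x.1 ∈ Φ,
      x.2 ∈ G ∧ x.2 - τ ⟨x.1, AddSubgroup.subset_closure h⟩ ∈ H} := by
  ext x
  exact ⟨fun ⟨h, hx⟩ => ⟨h, (sub_mem_cancel_right (hτ _)).1 (hHG hx), hx⟩,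
    fun ⟨h, _, hx⟩ => ⟨h, hx⟩⟩

lemma phiRe_eq_cosetSet (hτ : ∀ x, τ x ∈ G) {Λ : A → Set B} (hΛ : ∀ α ∈ Φ, Λ α = G) :
    PhiRe Φ Λ = cosetSet τ G := by
  ext ⟨α, y⟩
  refine ⟨fun ⟨hα, hy⟩ => ?_, fun ⟨hα, hy⟩ => ⟨hα, ?_⟩⟩
  · rw [hΛ α hα] at hy
    exact (mk_mem_cosetSet hα).2 (G.sub_mem hy (hτ _))
  · rw [hΛ α hα]
    exact (sub_mem_cancel_right (hτ _)).1 hy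

lemma cosetSet_subset_cosetSet (hne : Φ.Nonempty) : cosetSet τ H ⊆ cosetSet τ K ↔ H ≤ K := by
  obtain ⟨α, hα⟩ := hne
  refine ⟨fun hsub y hy => ?_, fun hHK x ⟨h, hx⟩ => ⟨h, hHK hx⟩⟩
  simpa [mk_mem_cosetSet hα] using
    hsub ((mk_mem_cosetSet (y := y + τ ⟨α, AddSubgroup.subset_closure hα⟩) hα).2 (by simpa))

lemma cosetSet_inj (hne : Φ.Nonempty) : cosetSet τ H = cosetSet τ K ↔ H = K := by
  simp only [subset_antisymm_iff, le_antisymm_iff, cosetSet_subset_cosetSet hne]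

lemma gr_cosetSet : Gr (cosetSet τ H) = Φ :=
  Set.ext fun _ => ⟨fun ⟨_, h, _⟩ => h, fun h => ⟨_, lift_mem_cosetSet h⟩⟩

lemma add_zsmul_mem_cosetSet {a x : A × B} (ha : a ∈ cosetSet τ H) (hx : x ∈ cosetSet τ H) (m : ℤ)
    (hmem : (x + m • a).1 ∈ Φ) : x + m • a ∈ cosetSet τ H := by
  obtain ⟨haΦ, haH⟩ := ha
  obtain ⟨hxΦ, hxH⟩ := hx
  refine ⟨hmem, ?_⟩
  have hτ : τ ⟨(x + m • a).1, AddSubgroup.subset_closure hmem⟩ =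
      τ ⟨x.1, AddSubgroup.subset_closure hxΦ⟩ + m • τ ⟨a.1, AddSubgroup.subset_closure haΦ⟩ := by
    rw [← map_zsmul, ← map_add]
    rfl
  rw [hτ, Prod.snd_add, Prod.smul_snd, add_sub_add_comm, ← smul_sub]
  exact H.add_mem hxH (H.zsmul_mem haH m)

end CosetSet

section CosetSetClosed

variable {Φ : Set V} {τ : AddSubgroup.closure Φ →+ Y} {G H : AddSubgroup Y}

lemma reflAff_mem_cosetSet (hΦ : IsSimplyLaced Φ) {a x : V × Y} (ha : a ∈ cosetSet τ H)
    (hx : x ∈ cosetSet τ H) : reflAff a x ∈ cosetSet τ H := by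
  obtain ⟨m, hm⟩ := hΦ.pairing_int a.1 ha.1 x.1 hx.1
  have hmem : (reflAff a x).1 ∈ Φ := hΦ.reflRoot_mem a.1 ha.1 x.1 hx.1
  rw [reflAff_eq_sub_zsmul hm, sub_eq_add_neg, ← neg_zsmul] at hmem ⊢
  exact add_zsmul_mem_cosetSet ha hx (-m) hmem

lemma isClosedSubSys_cosetSet_iff (hΦ : IsSimplyLaced Φ) (hne : Φ.Nonempty) :
    IsClosedSubSys (cosetSet τ G) (cosetSet τ H) ↔ H < G := by
  rw [lt_iff_le_and_ne]
  refine ⟨fun h => ⟨(cosetSet_subset_cosetSet hne).1 h.1.2.1,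
    mt (cosetSet_inj hne).2 h.1.2.2.1⟩, fun ⟨hle, hneq⟩ => ⟨⟨?_, ?_, ?_, ?_⟩, ?_⟩⟩
  · exact hne.elim fun _ hα => ⟨_, lift_mem_cosetSet hα⟩
  · exact (cosetSet_subset_cosetSet hne).2 hle
  · exact mt (cosetSet_inj hne).1 hneq
  · exact fun a ha x hx => reflAff_mem_cosetSet hΦ ha hx
  · intro x hx y hy hxy
    simpa using add_zsmul_mem_cosetSet hy hx 1 (by simpa using hxy.1)

end CosetSetClosed

/-- The pure translations `0 ⊕ y` in the subgroup of `V ⊕ Y` generated by `Ψ`. -/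
def translationSubgroup (Ψ : Set (V × Y)) : AddSubgroup Y :=
  (AddSubgroup.closure Ψ).comap (AddMonoidHom.inr V Y)

lemma isFullSubSys_of_cosetSet_subset {Φ : Set V} {Ψ : Set (V × Y)}
    {τ : AddSubgroup.closure Φ →+ Y} {G H : AddSubgroup Y} (hle : cosetSet τ H ⊆ Ψ)
    (hΨ : IsSubSys (cosetSet τ G) Ψ) : IsFullSubSys Φ Ψ where
  gr_eq := subset_antisymm (fun _ ⟨_, hy⟩ => (hΨ.2.1 hy).1)
    fun _ hα => ⟨_, hle (lift_mem_cosetSet hα)⟩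
  reflAff_mem := hΨ.2.2.2

section Classification

variable {Φ : Set V} (hΦ : IsSimplyLaced Φ) (hirr : IsIrreducible Φ) (hcard : 2 < Φ.encard)
include hΦ hirr hcard

lemma IsFullSubSys.eq_cosetSet {Ψ : Set (V × Y)} (hΨ : IsFullSubSys Φ Ψ)
    {τ : AddSubgroup.closure Φ →+ Y}
    (hτ : ∀ α (hα : α ∈ Φ), (α, τ ⟨α, AddSubgroup.subset_closure hα⟩) ∈ AddSubgroup.closure Ψ) :
    Ψ = cosetSet τ (translationSubgroup Ψ) := by
  have key (α : V) (hα : α ∈ Φ) (y : Y) :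
      (α, y) ∈ Ψ ↔ (α, y) ∈ cosetSet τ (translationSubgroup Ψ) := by
    rw [hΨ.mem_iff_mem_closure hΦ hirr hcard hα, mk_mem_cosetSet hα,
      ← sub_mem_cancel_right (hτ α hα), Prod.mk_sub_mk, sub_self]
    rfl
  ext ⟨α, y⟩
  exact ⟨fun h => (key α (hΨ.fst_mem h) y).1 h, fun h => (key α h.1 y).2 h⟩

theorem isMaxClosedSubSys_cosetSet_iff {τ : AddSubgroup.closure Φ →+ Y} {G H : AddSubgroup Y} :
    IsMaxClosedSubSys (cosetSet τ G) (cosetSet τ H) ↔ H ⋖ G := by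
  have hne : Φ.Nonempty := Set.encard_pos.1 (hcard.trans' (by norm_num))
  rw [covBy_iff_lt_and_eq_or_eq, IsMaxClosedSubSys, isClosedSubSys_cosetSet_iff hΦ hne]
  refine and_congr_right fun _ => ⟨fun hmax K hHK hKG => ?_, fun hmax Ψ hΨ hle => ?_⟩
  · refine hKG.lt_or_eq.imp_left fun hlt => (cosetSet_inj (τ := τ) hne).1 ?_
    exact hmax _ ((isClosedSubSys_cosetSet_iff hΦ hne).2 hlt) ((cosetSet_subset_cosetSet hne).2 hHK)
  · obtain ⟨K, rfl⟩ : ∃ K, Ψ = cosetSet τ K :=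
      ⟨_, (isFullSubSys_of_cosetSet_subset hle hΨ.1).eq_cosetSet hΦ hirr hcard fun _ hα =>
        AddSubgroup.subset_closure (hle (lift_mem_cosetSet hα))⟩
    have hKG := (isClosedSubSys_cosetSet_iff hΦ hne).1 hΨ
    exact (cosetSet_inj hne).2
      ((hmax K ((cosetSet_subset_cosetSet hne).1 hle) hKG.le).resolve_right hKG.ne)

lemma exists_addSubgroup_forall_eq {Λ : V → Set Y}
    (hΛ : ∀ α ∈ Φ, ∀ β ∈ Φ, ∀ z ∈ Λ α, ∀ y ∈ Λ β, y - pairing β α • z ∈ Λ (reflRoot α β))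
    (hzero : ∀ α ∈ Φ, 0 ∈ Λ α) : ∃ G : AddSubgroup Y, ∀ α ∈ Φ, Λ α = G := by
  have hfull := isFullSubSys_phiRe hΦ.reflRoot_mem hΛ fun α hα => ⟨0, hzero α hα⟩
  have heq := hfull.eq_cosetSet hΦ hirr hcard (τ := 0) fun α hα =>
    AddSubgroup.subset_closure ⟨hα, hzero α hα⟩
  refine ⟨translationSubgroup (PhiRe Φ Λ), fun α hα => Set.ext fun y => ?_⟩
  calc y ∈ Λ α ↔ (α, y) ∈ PhiRe Φ Λ := (and_iff_right hα).symm
    _ ↔ (α, y) ∈ cosetSet 0 (translationSubgroup (PhiRe Φ Λ)) := by rw [← heq]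
    _ ↔ y ∈ translationSubgroup (PhiRe Φ Λ) := by simp [mk_mem_cosetSet hα]

end Classification

section Lift

lemma free_closure_of_finite {A : Type*} [AddCommGroup A] [IsAddTorsionFree A] {s : Set A}
    (hs : s.Finite) : Module.Free ℤ (AddSubgroup.closure s) := by
  have : AddGroup.FG (AddSubgroup.closure s) :=
    (AddGroup.fg_iff_addSubgroup_fg _).2 ⟨hs.toFinset, by simp⟩
  have : Module.Finite ℤ (AddSubgroup.closure s) := Module.Finite.iff_addGroup_fg.2 this
  infer_instance

lemma exists_addMonoidHom_forall_mk_mem {A B : Type*} [AddCommGroup A] [AddCommGroup B]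
    (Γ : AddSubgroup (A × B)) (L : AddSubgroup A) [Module.Projective ℤ L]
    (hL : L ≤ Γ.map (AddMonoidHom.fst A B)) : ∃ τ : L →+ B, ∀ x : L, ((x : A), τ x) ∈ Γ := by
  let Γ' := Γ.comap (L.subtype.prodMap (AddMonoidHom.id B))
  let π : Γ' →ₗ[ℤ] L := ((AddMonoidHom.fst L B).comp Γ'.subtype).toIntLinearMap
  have hπ : Function.Surjective π := fun x => by
    obtain ⟨⟨_, b⟩, hb, hx⟩ := hL x.2
    subst hx
    exact ⟨⟨(x, b), hb⟩, rfl⟩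
  obtain ⟨σ, hσ⟩ := Module.projective_lifting_property π LinearMap.id hπ
  refine ⟨(AddMonoidHom.snd L B).comp (Γ'.subtype.comp σ.toAddMonoidHom), fun x => ?_⟩
  have hfst : (σ x).1.1 = x := LinearMap.congr_fun hσ x
  have hmem : ((σ x).1.1.1, (σ x).1.2) ∈ Γ := (σ x).2
  rwa [hfst] at hmem

lemma IsFullSubSys.exists_lift {Φ : Set V} [Module.Free ℤ (AddSubgroup.closure Φ)]
    {Ψ : Set (V × Y)} (hΨ : IsFullSubSys Φ Ψ) :
    ∃ τ : AddSubgroup.closure Φ →+ Y,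
      ∀ x : AddSubgroup.closure Φ, ((x : V), τ x) ∈ AddSubgroup.closure Ψ := by
  refine exists_addMonoidHom_forall_mk_mem _ _ ((AddSubgroup.closure_le _).2 fun α hα => ?_)
  obtain ⟨y, hy⟩ := hΨ.zset_nonempty hα
  exact ⟨(α, y), AddSubgroup.subset_closure hy, rfl⟩

end Lift

lemma closure_le_comap_snd {A B : Type*} [AddCommGroup A] [AddCommGroup B] {Φ : Set A}
    {Λ : A → Set B} {G : AddSubgroup B} (hΛ : ∀ α ∈ Φ, Λ α = G) {Ψ : Set (A × B)}
    (hΨ : Ψ ⊆ PhiRe Φ Λ) :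
    AddSubgroup.closure Ψ ≤ G.comap (AddMonoidHom.snd A B) :=
  (AddSubgroup.closure_le _).2 fun x hx => (hΛ x.1 (hΨ hx).1).subset (hΨ hx).2

theorem statement13_general {V Y : Type*} [NormedAddCommGroup V] [InnerProductSpace ℝ V]
    [AddCommGroup Y] [Module ℝ Y] {Φ : Set V} (hΦ : IsSimplyLaced Φ) (hirr : IsIrreducible Φ)
    (hcard : 2 < Φ.encard) [Module.Free ℤ (AddSubgroup.closure Φ)] {Λ : V → Set Y}
    (hΛ : ∀ α ∈ Φ, ∀ β ∈ Φ, ∀ z ∈ Λ α, ∀ y ∈ Λ β, y - pairing β α • z ∈ Λ (reflRoot α β))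
    (hzero : ∀ α ∈ Φ, 0 ∈ Λ α) :
    (∃ G : AddSubgroup Y, ∀ α ∈ Φ, Λ α = (G : Set Y)) ∧
    ∀ G : AddSubgroup Y, (∀ α ∈ Φ, Λ α = (G : Set Y)) →
      ∀ Ψ : Set (V × Y),
        (IsMaxClosedSubSys (PhiRe Φ Λ) Ψ ∧ Gr Ψ = Φ) ↔
        ∃ (H : AddSubgroup Y) (τ : AddSubgroup.closure Φ →+ Y),
          H ≤ G ∧ H ≠ G ∧ (∀ K : AddSubgroup Y, H ≤ K → K ≤ G → K = H ∨ K = G) ∧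
          (∀ x, τ x ∈ G) ∧
          Ψ = {x | ∃ h : x.1 ∈ Φ,
            x.2 ∈ G ∧ x.2 - τ ⟨x.1, AddSubgroup.subset_closure h⟩ ∈ H} := by
  refine ⟨exists_addSubgroup_forall_eq hΦ hirr hcard hΛ hzero, fun G hG Ψ => ⟨?_, ?_⟩⟩
  · rintro ⟨hmax, hgr⟩
    have hfull : IsFullSubSys Φ Ψ := ⟨hgr, hmax.1.1.2.2.2⟩
    obtain ⟨τ, hτ⟩ := hfull.exists_lift
    have hτG (x : AddSubgroup.closure Φ) : τ x ∈ G := closure_le_comap_snd hG hmax.1.1.2.1 (hτ x)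
    obtain ⟨H, rfl⟩ : ∃ H, Ψ = cosetSet τ H :=
      ⟨_, hfull.eq_cosetSet hΦ hirr hcard fun α hα => hτ ⟨α, AddSubgroup.subset_closure hα⟩⟩
    rw [phiRe_eq_cosetSet hτG hG, isMaxClosedSubSys_cosetSet_iff hΦ hirr hcard,
      covBy_iff_lt_and_eq_or_eq] at hmax
    exact ⟨H, τ, hmax.1.le, hmax.1.ne, hmax.2, hτG, cosetSet_eq_setOf hmax.1.le hτG⟩
  · rintro ⟨H, τ, hle, hne, hmax, hτG, rfl⟩
    rw [← cosetSet_eq_setOf hle hτG, phiRe_eq_cosetSet hτG hG,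
      isMaxClosedSubSys_cosetSet_iff hΦ hirr hcard, covBy_iff_lt_and_eq_or_eq]
    exact ⟨⟨hle.lt_of_ne hne, hmax⟩, gr_cosetSet⟩

/-- Theorem 5.1 (simply-laced case): maximal closed subroot systems with full
gradient.  The ℤ-linear map `τ : Φ̊ → Λ/H` is encoded by a lift
`τ : ⟨Φ̊⟩ →+ Y` with values in `Λ`. -/
theorem statement13 {V Y : Type*} [NormedAddCommGroup V] [InnerProductSpace ℝ V]
    [FiniteDimensional ℝ V] [AddCommGroup Y] [Module ℝ Y] [FiniteDimensional ℝ Y]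
    (Φ : Set V) (hΦ : IsRootSystem Φ) (hred : IsReduced Φ) (hirr : IsIrreducible Φ)
    (hlen : ∀ α ∈ Φ, ∀ β ∈ Φ, ⟪α, α⟫ = ⟪β, β⟫) (hcard : 2 < Φ.ncard)
    (Λ : V → Set Y) (hED : IsExtensionDatum Φ Λ) :
    (∃ G : AddSubgroup Y, ∀ α ∈ Φ, Λ α = (G : Set Y)) ∧
    ∀ G : AddSubgroup Y, (∀ α ∈ Φ, Λ α = (G : Set Y)) →
      ∀ Ψ : Set (V × Y),
        (IsMaxClosedSubSys (PhiRe Φ Λ) Ψ ∧ Gr Ψ = Φ) ↔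
        ∃ (H : AddSubgroup Y) (τ : AddSubgroup.closure Φ →+ Y),
          H ≤ G ∧ H ≠ G ∧ (∀ K : AddSubgroup Y, H ≤ K → K ≤ G → K = H ∨ K = G) ∧
          (∀ x, τ x ∈ G) ∧
          Ψ = {x | ∃ h : x.1 ∈ Φ,
            x.2 ∈ G ∧ x.2 - τ ⟨x.1, AddSubgroup.subset_closure h⟩ ∈ H} := by
  have : IsAddTorsionFree V := .of_isTorsionFree ℝ V
  have := free_closure_of_finite hΦ.1
  have hsl := hΦ.isSimplyLaced hlen
  exact statement13_general hsl hirr (hΦ.1.cast_ncard_eq ▸ mod_cast hcard) hED.1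
    fun α hα => hED.2.2.1 α (hsl.mem_ndSet hα)

end BdS
end
end
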